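/- Let G be a finite abelian group of odd order n, and let (A,η) be a reduced solution for G. Let Ĝ = Hom(G,ℂˣ) be the dual group of G (a finite abelian group of order n, written additively), with pairing ⟨g,χ⟩ = χ(g). Define Â : Ĝ×Ĝ → ℂ by Â(χ₁,χ₂) = (1/n)·Σ_{h,k∈G} A(2h,2k)·⟨h,χ₂⟩·conj(⟨k,χ₁⟩). Then (Â,η) is a reduced solution for Ĝ. -/

import Mathlib

open scoped BigOperators

/-- `d = (n + √(n²+4))/2` where `n` is the cardinality of `G`. -/
noncomputable def dR (G : Type) [Fintype G] : ℝ :=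
  ((Fintype.card G : ℝ) + Real.sqrt ((Fintype.card G : ℝ) ^ 2 + 4)) / 2

/-- The complex number `d`. -/
noncomputable def dC (G : Type) [Fintype G] : ℂ := ((dR G : ℝ) : ℂ)

/-- A reduced solution of the polynomial equations for a finite abelian group `G`
of odd order: a pair `(A, η)` satisfying the reduced equations. -/
structure ReducedSolution {G : Type} [AddCommGroup G] [Fintype G] [DecidableEq G]
    (A : G → G → ℂ) (η : ℂ) : Prop where
  cube : η ^ 3 = 1
  sum0 : ∑ h : G, A h 0 = -(starRingEnd ℂ) η / dC G
  orth : ∀ g g' k : G,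
    ∑ h : G, A (h - g) k * (starRingEnd ℂ) (A (h - g') k)
      = (if g = g' then (1 : ℂ) else 0) - (if k = (0 : G) then (1 : ℂ) else 0) / dC G
  herm : ∀ h k : G, A k h = (starRingEnd ℂ) (A h k)
  rot1 : ∀ h k : G, A h k = η * A (-k) (h - k)
  rot2 : ∀ h k : G, A h k = (starRingEnd ℂ) η * A (k - h) (-h)
  main : ∀ p q x y : G,
    ∑ l : G, A (x + y) l * A (-x) (l + p) * A (-y) (l + q)
      = A (p + x) (q + x + y) * A (q + y) (p + x + y)
        - (if x = (0 : G) then (1 : ℂ) else 0) * (if y = (0 : G) then (1 : ℂ) else 0) / dC G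

/-- The pairing `⟨g,χ⟩ = χ(g)` between a finite abelian group and its dual
`Ĝ = Hom(G, ℂˣ)` (written additively). -/
noncomputable def dualPair {G : Type} [AddCommGroup G]
    (g : G) (χ : G →+ Additive ℂˣ) : ℂ :=
  ((Additive.toMul (χ g) : ℂˣ) : ℂ)

/-- The accompanying solution on the dual group:
`Â(χ₁,χ₂) = (1/n)·Σ_{h,k} A(2h,2k)·⟨h,χ₂⟩·conj(⟨k,χ₁⟩)`. -/
noncomputable def dualA {G : Type} [AddCommGroup G] [Fintype G]
    (A : G → G → ℂ) : (G →+ Additive ℂˣ) → (G →+ Additive ℂˣ) → ℂ :=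
  fun χ₁ χ₂ => (1 / (Fintype.card G : ℂ)) *
    ∑ h : G, ∑ k : G,
      A (h + h) (k + k) * dualPair h χ₂ * (starRingEnd ℂ) (dualPair k χ₁)

/-! The reduced equations are invariant under isomorphisms of groups. Doubling is an automorphism
of `G`, so it is enough to show that the Fourier transform `Â` of `A` itself is a reduced solution.
Hermitian symmetry and the rotation symmetries are linear changes of variables.

For the orthogonality relation, transform `A h` in its second variable only. The relation says that
the autocorrelation of `A h` is a point mass minus a constant, so the squared modulus of this
transform is `1` minus a multiple of a point mass in the character. Parseval in the first variable
turns this into the orthogonality of `Â`.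

For the cubic equation, expand the cubic sum for `Â` in the second variable, where the equation for
`A` replaces the sum over `l` by a product of two values of `A`. A linear change of the four
summation variables identifies the result with the product of two values of `Â`. -/

open scoped ComplexConjugate

section FourierTransform

variable {G : Type*} [AddCommGroup G] [Fintype G]

/-- The Fourier transform of a function on a finite abelian group, evaluated at a character. The
character is not conjugated. -/
noncomputable def dualTransform (f : G → ℂ) (ψ : AddChar G ℂ) : ℂ := ∑ a, f a * ψ a

theorem dualTransform_apply (f : G → ℂ) (ψ : AddChar G ℂ) :
    dualTransform f ψ = ∑ a, f a * ψ a :=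
  rfl

theorem dualTransform_comp_add_left (f : G → ℂ) (b : G) (ψ : AddChar G ℂ) :
    dualTransform (fun a => f (b + a)) ψ = dualTransform f ψ * ψ (-b) := by
  rw [dualTransform_apply, dualTransform_apply, Finset.sum_mul]
  refine Fintype.sum_equiv (Equiv.addLeft b) _ _ fun a => ?_
  rw [Equiv.coe_addLeft, mul_assoc, ← AddChar.map_add_eq_mul, add_neg_cancel_comm]

theorem dualTransform_add (f : G → ℂ) (ψ φ : AddChar G ℂ) :
    dualTransform f (ψ + φ) = dualTransform (fun a => f a * φ a) ψ :=
  Finset.sum_congr rfl fun a _ => by rw [AddChar.add_apply]; ring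

theorem conj_dualTransform (f : G → ℂ) (ψ : AddChar G ℂ) :
    conj (dualTransform f ψ) = ∑ a, conj (f a) * ψ (-a) := by
  simp only [dualTransform, map_sum, map_mul, AddChar.map_neg_eq_conj]

theorem sum_dualTransform_mul_apply (f : G → ℂ) (a : G) :
    ∑ ψ, dualTransform f ψ * ψ a = Fintype.card G * f (-a) := by
  classical
  calc ∑ ψ, dualTransform f ψ * ψ a
      = ∑ b, f b * ∑ ψ : AddChar G ℂ, ψ (b + a) := by
        simp only [dualTransform, Finset.sum_mul, Finset.mul_sum, AddChar.map_add_eq_mul,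
          mul_assoc]
        exact Finset.sum_comm
    _ = Fintype.card G * f (-a) := by
        simp [AddChar.sum_apply_eq_ite, add_eq_zero_iff_eq_neg, mul_comm]

theorem sum_dualTransform (f : G → ℂ) : ∑ ψ, dualTransform f ψ = Fintype.card G * f 0 := by
  simpa using sum_dualTransform_mul_apply f 0

theorem sum_dualTransform_mul_conj (f g : G → ℂ) :
    ∑ ψ, dualTransform f ψ * conj (dualTransform g ψ) =
      Fintype.card G * ∑ a, f a * conj (g a) := by
  calc ∑ ψ, dualTransform f ψ * conj (dualTransform g ψ)
      = ∑ a, conj (g a) * ∑ ψ, dualTransform f ψ * ψ (-a) := by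
        simp only [conj_dualTransform, Finset.mul_sum]
        rw [Finset.sum_comm]
        simp only [mul_left_comm]
    _ = Fintype.card G * ∑ a, f a * conj (g a) := by
        simp only [sum_dualTransform_mul_apply, neg_neg, Finset.mul_sum]
        exact Finset.sum_congr rfl fun a _ => by ring

theorem sum_dualTransform_mul_mul (f g h : G → ℂ) :
    ∑ ψ, dualTransform f ψ * dualTransform g ψ * dualTransform h ψ =
      Fintype.card G * ∑ a, ∑ b, f (-a - b) * g a * h b := by
  calc ∑ ψ, dualTransform f ψ * dualTransform g ψ * dualTransform h ψ
      = ∑ ψ, ∑ a, ∑ b, g a * h b * (dualTransform f ψ * ψ (a + b)) := by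
        refine Finset.sum_congr rfl fun ψ _ => ?_
        rw [mul_assoc, dualTransform_apply g, dualTransform_apply h, Finset.sum_mul_sum]
        simp only [Finset.mul_sum, AddChar.map_add_eq_mul]
        exact Finset.sum_congr rfl fun a _ => Finset.sum_congr rfl fun b _ => by ring
    _ = ∑ a, ∑ b, g a * h b * ∑ ψ, dualTransform f ψ * ψ (a + b) := by
        simp only [Finset.mul_sum]
        rw [Finset.sum_comm]
        exact Finset.sum_congr rfl fun a _ => Finset.sum_comm
    _ = Fintype.card G * ∑ a, ∑ b, f (-a - b) * g a * h b := by
        simp only [sum_dualTransform_mul_apply, neg_add', Finset.mul_sum]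
        exact Finset.sum_congr rfl fun a _ => Finset.sum_congr rfl fun b _ => by ring

theorem dualTransform_autocorrelation (f : G → ℂ) (ψ : AddChar G ℂ) :
    dualTransform (fun t => ∑ b, f (b + t) * conj (f b)) ψ =
      dualTransform f ψ * conj (dualTransform f ψ) := by
  calc dualTransform (fun t => ∑ b, f (b + t) * conj (f b)) ψ
      = ∑ b, conj (f b) * dualTransform (fun t => f (b + t)) ψ := by
        simp only [dualTransform, Finset.sum_mul, Finset.mul_sum]
        rw [Finset.sum_comm]
        exact Finset.sum_congr rfl fun b _ => Finset.sum_congr rfl fun t _ => by ring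
    _ = dualTransform f ψ * conj (dualTransform f ψ) := by
        simp only [dualTransform_comp_add_left, conj_dualTransform, Finset.mul_sum]
        simp only [mul_left_comm]

theorem dualTransform_mul_conj_self_of_autocorrelation [DecidableEq G]
    [DecidableEq (AddChar G ℂ)] {f : G → ℂ} {c : ℂ}
    (hf : ∀ t, ∑ b, f (b + t) * conj (f b) = (if t = 0 then 1 else 0) - c) (ψ : AddChar G ℂ) :
    dualTransform f ψ * conj (dualTransform f ψ) =
      1 - c * if ψ = 0 then (Fintype.card G : ℂ) else 0 := by
  rw [← dualTransform_autocorrelation]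
  simp only [hf, dualTransform, sub_mul, Finset.sum_sub_distrib, ← Finset.mul_sum,
    AddChar.sum_eq_ite]
  simp

theorem dualTransform_neg_add_mul_mul (f g h : G → ℂ) (χ ψ : AddChar G ℂ) :
    dualTransform f (-(χ + ψ)) * dualTransform g χ * dualTransform h ψ =
      ∑ s, ∑ t, χ s * ψ t * ∑ l, f l * g (l + s) * h (l + t) := by
  calc dualTransform f (-(χ + ψ)) * dualTransform g χ * dualTransform h ψ
      = ∑ l, f l * (dualTransform (fun s => g (l + s)) χ *
          dualTransform (fun t => h (l + t)) ψ) := by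
        rw [dualTransform_apply f, mul_assoc, Finset.sum_mul]
        refine Finset.sum_congr rfl fun l _ => ?_
        rw [dualTransform_comp_add_left, dualTransform_comp_add_left, AddChar.neg_apply,
          AddChar.add_apply]
        ring
    _ = ∑ s, ∑ t, χ s * ψ t * ∑ l, f l * g (l + s) * h (l + t) := by
        simp only [dualTransform, Finset.sum_mul_sum]
        simp only [Finset.mul_sum]
        rw [Finset.sum_comm]
        refine Finset.sum_congr rfl fun s _ => ?_
        rw [Finset.sum_comm]
        exact Finset.sum_congr rfl fun t _ => Finset.sum_congr rfl fun l _ => by ring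

end FourierTransform

theorem sum_sum_mul_sum_sum_eq_sum_sub {G R : Type*} [AddCommGroup G] [Fintype G]
    [NonUnitalNonAssocSemiring R] (f g : G → G → R) :
    (∑ h, ∑ k, f h k) * ∑ h, ∑ k, g h k =
      ∑ a, ∑ b, ∑ s, ∑ t, f (s - a) (t - a - b) * g (t - b) (s - a - b) := by
  have hchange : ∑ v : (G × G) × G × G, f v.1.1 v.1.2 * g v.2.1 v.2.2 =
      ∑ w : (G × G) × G × G, f (w.2.1 - w.1.1) (w.2.2 - w.1.1 - w.1.2) *
        g (w.2.2 - w.1.2) (w.2.1 - w.1.1 - w.1.2) := by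
    refine (Finset.sum_nbij'
      (fun ((a, b), s, t) => ((s - a, t - a - b), t - b, s - a - b))
      (fun ((h, k), h', k') => ((h' - k, h - k'), h + h' - k, h + h' - k'))
      (by simp) (by simp) ?_ ?_ (by simp)).symm
    · rintro ⟨⟨a, b⟩, s, t⟩ -
      refine Prod.ext (Prod.ext ?_ ?_) (Prod.ext ?_ ?_) <;> dsimp only <;> abel
    · rintro ⟨⟨h, k⟩, h', k'⟩ -
      refine Prod.ext (Prod.ext ?_ ?_) (Prod.ext ?_ ?_) <;> dsimp only <;> abel
  simp only [Fintype.sum_prod_type] at hchange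
  simp only [Finset.sum_mul]
  simpa only [Finset.mul_sum] using hchange

section KernelTransform

variable {G : Type*} [AddCommGroup G] [Fintype G]

/-- The normalised Fourier transform of a kernel `B` on `G × G`, conjugated in the second variable
and with the two indices interchanged: `dualA` is this transform of `(h, k) ↦ A (2h) (2k)`. -/
noncomputable def kernelTransform (B : G → G → ℂ) (χ ψ : AddChar G ℂ) : ℂ :=
  1 / Fintype.card G * dualTransform (fun h => dualTransform (B h) (-χ)) ψ

theorem kernelTransform_eq_sum (B : G → G → ℂ) (χ ψ : AddChar G ℂ) :
    kernelTransform B χ ψ = 1 / Fintype.card G * ∑ h, ∑ k, B h k * ψ h * χ (-k) := by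
  simp only [kernelTransform, dualTransform, Finset.sum_mul, AddChar.neg_apply, mul_right_comm]

theorem kernelTransform_eq_conj {B : G → G → ℂ} (hB : ∀ h k, B k h = conj (B h k))
    (χ ψ : AddChar G ℂ) : kernelTransform B ψ χ = conj (kernelTransform B χ ψ) := by
  simp only [kernelTransform_eq_sum, map_mul, map_sum, map_div₀, map_one, map_natCast,
    ← AddChar.map_neg_eq_conj, ← hB, neg_neg]
  rw [Finset.sum_comm]
  simp only [mul_right_comm]

theorem kernelTransform_rotate {B : G → G → ℂ} {η : ℂ} (hB : ∀ h k, B h k = η * B (-k) (h - k))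
    (χ ψ : AddChar G ℂ) : kernelTransform B χ ψ = η * kernelTransform B (-ψ) (χ - ψ) := by
  rw [kernelTransform_eq_sum, kernelTransform_eq_sum, mul_left_comm, Finset.sum_comm]
  congr 1
  rw [Finset.mul_sum]
  refine Fintype.sum_equiv (Equiv.neg G) _ _ fun k => ?_
  rw [Finset.mul_sum]
  refine Fintype.sum_equiv (Equiv.subRight k) _ _ fun h => ?_
  have hψ : ψ h = ψ k * ψ (h - k) := by rw [← AddChar.map_add_eq_mul, add_sub_cancel]
  simp only [Equiv.neg_apply, Equiv.subRight_apply, AddChar.sub_apply, AddChar.neg_apply, neg_neg]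
  rw [hB h k, hψ]
  ring

theorem sum_kernelTransform_zero (B : G → G → ℂ) :
    ∑ ψ : AddChar G ℂ, kernelTransform B 0 ψ = ∑ k, B 0 k := by
  have hn : (Fintype.card G : ℂ) ≠ 0 := Nat.cast_ne_zero.2 Fintype.card_ne_zero
  simp only [kernelTransform]
  rw [← Finset.mul_sum, sum_dualTransform]
  simp [dualTransform, hn]

theorem sum_kernelTransform_sub_mul_conj [DecidableEq G] [DecidableEq (AddChar G ℂ)]
    {B : G → G → ℂ} {c : ℂ}
    (hB : ∀ h t, ∑ k, B h (k + t) * conj (B h k) =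
      (if t = 0 then 1 else 0) - (if h = 0 then 1 else 0) / c)
    (γ γ' χ : AddChar G ℂ) :
    ∑ ψ, kernelTransform B χ (ψ - γ) * conj (kernelTransform B χ (ψ - γ')) =
      (if γ = γ' then 1 else 0) - (if χ = 0 then 1 else 0) / c := by
  have hn : (Fintype.card G : ℂ) ≠ 0 := Nat.cast_ne_zero.2 Fintype.card_ne_zero
  set F : G → ℂ := fun h => dualTransform (B h) (-χ) with hF
  have hFF (h : G) : F h * conj (F h) =
      1 - (if h = 0 then 1 else 0) / c * if χ = 0 then (Fintype.card G : ℂ) else 0 := by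
    simpa only [neg_eq_zero] using dualTransform_mul_conj_self_of_autocorrelation (hB h) (-χ)
  have hmod (h : G) : F h * (-γ) h * conj (F h * (-γ') h) = F h * conj (F h) * (γ' - γ) h := by
    simp only [map_mul, AddChar.neg_apply, AddChar.sub_apply, AddChar.map_neg_eq_conj,
      Complex.conj_conj]
    ring
  calc ∑ ψ, kernelTransform B χ (ψ - γ) * conj (kernelTransform B χ (ψ - γ'))
      = (1 / Fintype.card G) ^ 2 * ∑ ψ, dualTransform (fun h => F h * (-γ) h) ψ *
          conj (dualTransform (fun h => F h * (-γ') h) ψ) := by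
        simp only [kernelTransform, ← hF, sub_eq_add_neg, dualTransform_add, map_mul, map_div₀,
          map_one, map_natCast, Finset.mul_sum]
        exact Finset.sum_congr rfl fun ψ _ => by ring
    _ = 1 / Fintype.card G * ∑ h, F h * conj (F h) * (γ' - γ) h := by
        rw [sum_dualTransform_mul_conj]
        simp only [hmod]
        field_simp
    _ = (if γ = γ' then 1 else 0) - (if χ = 0 then 1 else 0) / c := by
        simp only [hFF, sub_mul, one_mul, Finset.sum_sub_distrib, AddChar.sum_eq_ite, sub_eq_zero,
          eq_comm (a := γ')]
        simp only [ite_div, zero_div, ite_mul, zero_mul, Finset.sum_ite_eq', Finset.mem_univ,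
          if_true, AddChar.map_zero_eq_one]
        split_ifs <;> field_simp <;> ring

theorem kernelTransform_mul_kernelTransform (B : G → G → ℂ) (p q x y : AddChar G ℂ) :
    kernelTransform B (p + x) (q + x + y) * kernelTransform B (q + y) (p + x + y) =
      (1 / Fintype.card G) ^ 2 * ∑ a, ∑ b, p a * q b * ∑ s, ∑ t, x s * y t *
        (B (s - a) (t - a - b) * B (t - b) (s - a - b)) := by
  rw [kernelTransform_eq_sum, kernelTransform_eq_sum, mul_mul_mul_comm, ← sq,
    sum_sum_mul_sum_sum_eq_sum_sub]
  simp only [Finset.mul_sum]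
  refine Finset.sum_congr rfl fun a _ => Finset.sum_congr rfl fun b _ =>
    Finset.sum_congr rfl fun s _ => Finset.sum_congr rfl fun t _ => ?_
  have hp : p a = p (-(t - a - b)) * p (t - b) := by
    rw [← AddChar.map_add_eq_mul]; congr 1; abel
  have hq : q b = q (s - a) * q (-(s - a - b)) := by
    rw [← AddChar.map_add_eq_mul]; congr 1; abel
  have hx : x s = x (s - a) * x (-(t - a - b)) * x (t - b) := by
    rw [← AddChar.map_add_eq_mul, ← AddChar.map_add_eq_mul]; congr 1; abel
  have hy : y t = y (s - a) * y (t - b) * y (-(s - a - b)) := by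
    rw [← AddChar.map_add_eq_mul, ← AddChar.map_add_eq_mul]; congr 1; abel
  rw [hp, hq, hx, hy]
  simp only [AddChar.add_apply]
  ring

theorem dualTransform_row_mul_row_mul_row [DecidableEq G]
    {B : G → G → ℂ} {c : ℂ}
    (hB : ∀ p q x y, ∑ l, B (x + y) l * B (-x) (l + p) * B (-y) (l + q) =
      B (p + x) (q + x + y) * B (q + y) (p + x + y) -
        (if x = 0 then 1 else 0) * (if y = 0 then 1 else 0) / c)
    (a b : G) (x y : AddChar G ℂ) :
    dualTransform (B (-a - b)) (-(x + y)) * dualTransform (B a) x * dualTransform (B b) y =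
      ∑ s, ∑ t, x s * y t * (B (s - a) (t - a - b) * B (t - b) (s - a - b)) -
        (if a = 0 then 1 else 0) * (if b = 0 then 1 else 0) / c * ((∑ s, x s) * ∑ t, y t) := by
  have hrow (s t : G) : ∑ l, B (-a - b) l * B a (l + s) * B b (l + t) =
      B (s - a) (t - a - b) * B (t - b) (s - a - b) -
        (if a = 0 then 1 else 0) * (if b = 0 then 1 else 0) / c := by
    simpa only [neg_neg, neg_eq_zero, ← sub_eq_add_neg] using hB s t (-a) (-b)
  rw [dualTransform_neg_add_mul_mul, Finset.sum_mul_sum]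
  simp only [hrow, mul_sub, Finset.sum_sub_distrib, Finset.sum_mul,
    mul_comm (_ / c)]

theorem sum_kernelTransform_mul_mul [DecidableEq G] [DecidableEq (AddChar G ℂ)]
    {B : G → G → ℂ} {c : ℂ}
    (hB : ∀ p q x y, ∑ l, B (x + y) l * B (-x) (l + p) * B (-y) (l + q) =
      B (p + x) (q + x + y) * B (q + y) (p + x + y) -
        (if x = 0 then 1 else 0) * (if y = 0 then 1 else 0) / c)
    (p q x y : AddChar G ℂ) :
    ∑ l, kernelTransform B (x + y) l * kernelTransform B (-x) (l + p) *
        kernelTransform B (-y) (l + q) =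
      kernelTransform B (p + x) (q + x + y) * kernelTransform B (q + y) (p + x + y) -
        (if x = 0 then 1 else 0) * (if y = 0 then 1 else 0) / c := by
  have hn : (Fintype.card G : ℂ) ≠ 0 := Nat.cast_ne_zero.2 Fintype.card_ne_zero
  calc ∑ l, kernelTransform B (x + y) l * kernelTransform B (-x) (l + p) *
          kernelTransform B (-y) (l + q)
      = (1 / Fintype.card G) ^ 3 * ∑ l, dualTransform (fun a => dualTransform (B a) (-(x + y))) l *
          dualTransform (fun a => dualTransform (B a) x * p a) l *
          dualTransform (fun a => dualTransform (B a) y * q a) l := by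
        simp only [kernelTransform, dualTransform_add, neg_neg, Finset.mul_sum]
        exact Finset.sum_congr rfl fun l _ => by ring
    _ = (1 / Fintype.card G) ^ 2 * ∑ a, ∑ b, p a * q b *
          (dualTransform (B (-a - b)) (-(x + y)) * dualTransform (B a) x *
            dualTransform (B b) y) := by
        rw [sum_dualTransform_mul_mul, ← mul_assoc]
        congr 1
        · field_simp
        · exact Finset.sum_congr rfl fun a _ => Finset.sum_congr rfl fun b _ => by ring
    _ = (1 / Fintype.card G) ^ 2 * (∑ a, ∑ b, p a * q b * ∑ s, ∑ t, x s * y t *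
            (B (s - a) (t - a - b) * B (t - b) (s - a - b)) -
          (∑ s, x s) * (∑ t, y t) / c) := by
        simp only [dualTransform_row_mul_row_mul_row hB, mul_sub, Finset.sum_sub_distrib]
        simp [div_eq_mul_inv, mul_comm]
    _ = kernelTransform B (p + x) (q + x + y) * kernelTransform B (q + y) (p + x + y) -
          (if x = 0 then 1 else 0) * (if y = 0 then 1 else 0) / c := by
        rw [mul_sub, ← kernelTransform_mul_kernelTransform, AddChar.sum_eq_ite,
          AddChar.sum_eq_ite]
        congr 1
        split_ifs <;> field_simp <;> ring

end KernelTransform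

theorem dC_congr {G H : Type} [Fintype G] [Fintype H] (h : Fintype.card G = Fintype.card H) :
    dC G = dC H := by
  simp only [dC, dR, h]

namespace ReducedSolution

variable {G H : Type} [AddCommGroup G] [Fintype G] [DecidableEq G]
  [AddCommGroup H] [Fintype H] [DecidableEq H] {A : G → G → ℂ} {η : ℂ}

theorem comp_addEquiv (hA : ReducedSolution A η) (e : H ≃+ G) :
    ReducedSolution (fun h k => A (e h) (e k)) η where
  cube := hA.cube
  sum0 := by
    rw [dC_congr (Fintype.card_congr e.toEquiv), ← hA.sum0, map_zero]
    exact e.toEquiv.sum_comp fun h => A h 0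
  orth g g' k := by
    rw [dC_congr (Fintype.card_congr e.toEquiv)]
    have h := hA.orth (e g) (e g') (e k)
    rw [← e.toEquiv.sum_comp] at h
    simpa using h
  herm h k := hA.herm (e h) (e k)
  rot1 h k := by simpa using hA.rot1 (e h) (e k)
  rot2 h k := by simpa using hA.rot2 (e h) (e k)
  main p q x y := by
    rw [dC_congr (Fintype.card_congr e.toEquiv)]
    have h := hA.main (e p) (e q) (e x) (e y)
    rw [← e.toEquiv.sum_comp] at h
    simpa using h

theorem conj_mul_self (hA : ReducedSolution A η) : conj η * η = 1 := by
  rw [Complex.conj_mul', Complex.norm_eq_one_of_pow_eq_one hA.cube three_ne_zero]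
  norm_num

theorem sum_row_mul_conj (hA : ReducedSolution A η) (h t : G) :
    ∑ k, A h (k + t) * conj (A h k) =
      (if t = 0 then 1 else 0) - (if h = 0 then 1 else 0) / dC G := by
  have key := hA.orth 0 (-t) h
  simp only [sub_zero, sub_neg_eq_add, ← hA.herm, zero_eq_neg] at key
  rw [← key]
  exact Finset.sum_congr rfl fun k _ => by rw [← hA.herm, mul_comm]

protected theorem kernelTransform [DecidableEq (AddChar G ℂ)] (hA : ReducedSolution A η) :
    ReducedSolution (kernelTransform A) η := by
  have hd : dC (AddChar G ℂ) = dC G := dC_congr AddChar.card_eq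
  have herm := kernelTransform_eq_conj hA.herm
  have rot := kernelTransform_rotate hA.rot1
  refine ⟨hA.cube, ?_, fun γ γ' χ => ?_, herm, rot, fun χ ψ => ?_, fun p q x y => ?_⟩
  · calc ∑ χ, kernelTransform A χ 0 = conj (∑ χ, kernelTransform A 0 χ) := by
          rw [map_sum]
          exact Finset.sum_congr rfl fun χ _ => herm 0 χ
      _ = ∑ h, A h 0 := by
          rw [sum_kernelTransform_zero, map_sum]
          exact Finset.sum_congr rfl fun h _ => (hA.herm 0 h).symm
      _ = -conj η / dC (AddChar G ℂ) := by rw [hA.sum0, hd]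
  · have key := sum_kernelTransform_sub_mul_conj hA.sum_row_mul_conj γ' γ χ
    simp only [← herm] at key
    rw [hd]
    simpa only [← herm, mul_comm, eq_comm] using key
  · rw [rot (ψ - χ) (-χ), ← mul_assoc, hA.conj_mul_self, one_mul, neg_neg, sub_neg_eq_add,
      sub_add_cancel]
  · rw [hd]
    exact sum_kernelTransform_mul_mul hA.main p q x y

end ReducedSolution

/-- The identification of `Hom(G, Mˣ)` with the group of additive characters `G → M`, by forgetting
that the values are invertible. It carries results about `AddChar G ℂ` over to the domain of
`dualA`. -/
def homUnitsAddEquivAddChar (G M : Type*) [AddCommGroup G] [CommMonoid M] :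
    (G →+ Additive Mˣ) ≃+ AddChar G M where
  toFun χ := (Units.coeHom M).compAddChar (AddChar.toAddMonoidHomEquiv.symm χ)
  invFun ψ := AddChar.toAddMonoidHomEquiv (AddChar.toMonoidHomEquiv.symm ψ.toMonoidHom.toHomUnits)
  left_inv χ := by ext; rfl
  right_inv ψ := by ext; rfl
  map_add' χ ψ := by ext; rfl

theorem dualA_eq_kernelTransform {G : Type} [AddCommGroup G] [Fintype G] (A : G → G → ℂ)
    (χ ψ : G →+ Additive ℂˣ) :
    dualA A χ ψ = kernelTransform (fun h k => A (2 • h) (2 • k))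
      (homUnitsAddEquivAddChar G ℂ χ) (homUnitsAddEquivAddChar G ℂ ψ) := by
  simp only [kernelTransform_eq_sum, AddChar.map_neg_eq_conj, two_nsmul]
  rfl

/-- If `(A, η)` is a reduced solution for a finite abelian group `G` of odd order, then
`(Â, η)` is a reduced solution for the dual group `Ĝ = Hom(G, ℂˣ)`. -/
theorem dual_reducedSolution
    {G : Type} [AddCommGroup G] [Fintype G] [DecidableEq G]
    (hodd : Odd (Fintype.card G))
    [Fintype (G →+ Additive ℂˣ)] [DecidableEq (G →+ Additive ℂˣ)]
    (A : G → G → ℂ) (η : ℂ) (hsol : ReducedSolution A η) :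
    ReducedSolution (dualA A) η := by
  classical
  have hcop : (Nat.card G).Coprime 2 := by
    rwa [Nat.card_eq_fintype_card, Nat.coprime_two_right]
  let double : G ≃+ G := .ofBijective (nsmulAddMonoidHom 2) (nsmulCoprime hcop).bijective
  rw [funext₂ (dualA_eq_kernelTransform A)]
  exact (hsol.comp_addEquiv double).kernelTransform.comp_addEquiv (homUnitsAddEquivAddChar G ℂ)
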